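/- arXiv:1906.00428 — 3 statements merged into one kernel-verified Lean document; each statement's English description precedes it below -/
import Mathlib

section
/- Let c and d be integers with c + 11d ≠ 0 and let α = α(c,d). Then for every positive integer r, |A_r − (α r)/2| < 2 + α/2 + (1 + α/2)·log_{11}|c + 11d|. -/
/-!
The sequence `μ_i` is attracted by a 2-periodic orbit. With `N_i = c + 11d` for even `i` and
`N_i = 11c + d` for odd `i` one has `11 N_{i+1} = 120 λ_i + N_i`, so the rational sequence
`N_i / 24` satisfies the recursion of `μ_i` with the ceiling removed. The scaled error
`y_i = N_i - 24 μ_i` therefore obeys `y_i - 240 ≤ 11 y_{i+1} ≤ y_i`.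

Write `N = c + 11d = y_0`. If `N > 0`, then `-24 < y_i` and `11^i y_i ≤ N`, so `-24 < y_i ≤ 0` as
soon as `11^i > N`. If `N < 0`, then `y_i < 0` and `11^i (-(y_i + 24)) ≤ -N - 24`, so
`-24 ≤ y_i < 0` as soon as `11^i > -N`. In both cases this pins `μ_i` to the limit value
`⌈N_i / 24⌉ + ω` (`muSeq_eq_limMu`).

Hence `θ(λ_i, μ_i)` differs from its 2-periodic limit for at most `K = ⌊log₁₁ |N|⌋ + 1` indices,
each time by at most `1`, and the partial sums of the limit differ from `α r / 2` by at most
`α / 2`. So the left-hand side is at most `K + α / 2 ≤ 1 + log₁₁ |N| + α / 2`.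
-/

/-- The table of values `θ(λ, μ)` for `0 ≤ λ ≤ 10`, `0 ≤ μ ≤ 4`; row `μ`, column `λ`. -/
def thetaTable : List (List ℕ) :=
  [[0,1,0,1,0,1,0,1,1,0,0],
   [1,1,0,1,0,0,0,1,1,0,0],
   [1,1,1,0,0,0,0,1,1,0,0],
   [1,0,1,0,0,0,0,1,1,0,0],
   [1,0,1,0,1,0,1,1,0,0,0]]

/-- The function `θ : ℤ × ℤ → {0,1}`, determined by `θ(λ-11, μ) = θ(λ, μ)`,
`θ(λ+12, μ-5) = θ(λ, μ)` and the table of values for `0 ≤ λ ≤ 10`, `0 ≤ μ ≤ 4`. -/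
def theta (lam mu : ℤ) : ℕ :=
  (thetaTable.getD (mu % 5).toNat []).getD ((lam + 12 * (mu / 5)) % 11).toNat 0

/-- `λ_i`: equal to `c` for even `i` and `d` for odd `i`. -/
def lamSeq (c d : ℤ) (i : ℕ) : ℤ := if i % 2 = 0 then c else d

/-- `μ_i`: defined by `μ_0 = 0` and `μ_i = ⌈(5 λ_{i-1} + μ_{i-1}) / 11⌉`. -/
def muSeq (c d : ℤ) : ℕ → ℤ
  | 0 => 0
  | i + 1 => ⌈((5 * lamSeq c d i + muSeq c d i : ℤ) : ℚ) / 11⌉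

/-- `A_r = ∑_{i=0}^{r-1} θ(λ_i, μ_i)`. -/
def Aseq (c d : ℤ) (r : ℕ) : ℕ := ∑ i ∈ Finset.range r, theta (lamSeq c d i) (muSeq c d i)

/-- `ω(c,d) = 1` if `c + 11d < 0` and `24 ∣ c + 11d`, and `ω(c,d) = 0` otherwise. -/
def omega (c d : ℤ) : ℤ := if c + 11 * d < 0 ∧ (24 : ℤ) ∣ (c + 11 * d) then 1 else 0

/-- `α(c,d) = θ(d, ⌈(11c+d)/24⌉ + ω(c,d)) + θ(c, ⌈(c+11d)/24⌉ + ω(c,d))`. -/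
def alphaCD (c d : ℤ) : ℕ :=
  theta d (⌈((11 * c + d : ℤ) : ℚ) / 24⌉ + omega c d) +
    theta c (⌈((c + 11 * d : ℤ) : ℚ) / 24⌉ + omega c d)

theorem theta_le_one (l m : ℤ) : theta l m ≤ 1 := by
  have key : ∀ a < 5, ∀ b < 11, (thetaTable.getD a []).getD b 0 ≤ 1 := by decide
  exact key _ (by omega) _ (by omega)

/-- `N_i`, which is `24` times the 2-periodic rational orbit attracting `μ_i`. -/
def limNum (c d : ℤ) (i : ℕ) : ℤ := if i % 2 = 0 then c + 11 * d else 11 * c + d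

/-- The eventual value `⌈N_i / 24⌉ + ω(c,d)` of `μ_i`. -/
def limMu (c d : ℤ) (i : ℕ) : ℤ := ⌈((limNum c d i : ℤ) : ℚ) / 24⌉ + omega c d

/-- The eventual value of `θ(λ_i, μ_i)`. -/
def limTheta (c d : ℤ) (i : ℕ) : ℕ := theta (lamSeq c d i) (limMu c d i)

theorem limNum_succ (c d : ℤ) (i : ℕ) :
    11 * limNum c d (i + 1) = 120 * lamSeq c d i + limNum c d i := by
  unfold limNum lamSeq
  rcases Nat.mod_two_eq_zero_or_one i with h | h
  · have h' : (i + 1) % 2 = 1 := by omega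
    simp only [h, h']; norm_num; ring
  · have h' : (i + 1) % 2 = 0 := by omega
    simp only [h, h']; norm_num; ring

theorem muSeq_succ_bounds (c d : ℤ) (i : ℕ) :
    5 * lamSeq c d i + muSeq c d i ≤ 11 * muSeq c d (i + 1) ∧
      11 * muSeq c d (i + 1) ≤ 5 * lamSeq c d i + muSeq c d i + 10 := by
  have h1 := Int.le_ceil (((5 * lamSeq c d i + muSeq c d i : ℤ) : ℚ) / 11)
  have h2 := Int.ceil_lt_add_one (((5 * lamSeq c d i + muSeq c d i : ℤ) : ℚ) / 11)
  change _ ≤ ((muSeq c d (i + 1) : ℤ) : ℚ) at h1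
  change ((muSeq c d (i + 1) : ℤ) : ℚ) < _ at h2
  have h3 : ((5 * lamSeq c d i + muSeq c d i : ℤ) : ℚ) ≤ ((11 * muSeq c d (i + 1) : ℤ) : ℚ) := by
    push_cast at *; linarith
  have h4 : ((11 * muSeq c d (i + 1) : ℤ) : ℚ) <
      ((5 * lamSeq c d i + muSeq c d i + 11 : ℤ) : ℚ) := by
    push_cast at *; linarith
  have h5 := Int.cast_le.mp h3
  have h6 := Int.cast_lt.mp h4
  omega

/-- The scaled error `y_i = N_i - 24 μ_i`. -/
def muErr (c d : ℤ) (i : ℕ) : ℤ := limNum c d i - 24 * muSeq c d i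

theorem muErr_zero (c d : ℤ) : muErr c d 0 = c + 11 * d := by
  simp [muErr, limNum, muSeq]

theorem muErr_succ (c d : ℤ) (i : ℕ) :
    muErr c d i - 240 ≤ 11 * muErr c d (i + 1) ∧ 11 * muErr c d (i + 1) ≤ muErr c d i := by
  have h1 := limNum_succ c d i
  have h2 := muSeq_succ_bounds c d i
  unfold muErr
  omega

theorem muErr_of_pos (c d : ℤ) (h : 0 < c + 11 * d) (i : ℕ) :
    -24 < muErr c d i ∧ 11 ^ i * muErr c d i ≤ c + 11 * d := by
  induction i with
  | zero => rw [muErr_zero, pow_zero]; omega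
  | succ i ih =>
    have h1 := muErr_succ c d i
    refine ⟨by omega, ?_⟩
    have h2 := mul_le_mul_of_nonneg_left h1.2 (by positivity : (0 : ℤ) ≤ 11 ^ i)
    rw [pow_succ]
    linarith [ih.2]

theorem muErr_of_neg (c d : ℤ) (h : c + 11 * d < 0) (i : ℕ) :
    muErr c d i < 0 ∧ 11 ^ i * (-(muErr c d i + 24)) ≤ -(c + 11 * d) - 24 := by
  induction i with
  | zero => rw [muErr_zero, pow_zero]; omega
  | succ i ih =>
    have h1 := muErr_succ c d i
    refine ⟨by omega, ?_⟩
    have h2 := mul_le_mul_of_nonneg_left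
      (by omega : 11 * (-(muErr c d (i + 1) + 24)) ≤ -(muErr c d i + 24))
      (by positivity : (0 : ℤ) ≤ 11 ^ i)
    rw [pow_succ]
    linarith [ih.2]

theorem dvd_limNum_iff (c d : ℤ) (i : ℕ) : (24 : ℤ) ∣ limNum c d i ↔ (24 : ℤ) ∣ c + 11 * d := by
  unfold limNum
  split_ifs <;> omega

theorem ceil_div_bounds (n : ℤ) :
    n ≤ 24 * ⌈((n : ℤ) : ℚ) / 24⌉ ∧ 24 * ⌈((n : ℤ) : ℚ) / 24⌉ < n + 24 := by
  have h1 := Int.le_ceil ((n : ℚ) / 24)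
  have h2 := Int.ceil_lt_add_one ((n : ℚ) / 24)
  constructor
  · have : (n : ℚ) ≤ ((24 * ⌈(n : ℚ) / 24⌉ : ℤ) : ℚ) := by push_cast; linarith
    exact Int.cast_le.mp this
  · have : ((24 * ⌈(n : ℚ) / 24⌉ : ℤ) : ℚ) < ((n + 24 : ℤ) : ℚ) := by push_cast; linarith
    exact Int.cast_lt.mp this

theorem muSeq_eq_limMu (c d : ℤ) (h : c + 11 * d ≠ 0) (i : ℕ) (hi : |c + 11 * d| < 11 ^ i) :
    muSeq c d i = limMu c d i := by
  have hp : (0 : ℤ) < 11 ^ i := by positivity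
  have hc := ceil_div_bounds (limNum c d i)
  have hd := dvd_limNum_iff c d i
  unfold limMu omega
  rcases lt_or_gt_of_ne h with hn | hn
  · obtain ⟨h1, h2⟩ := muErr_of_neg c d hn i
    rw [abs_of_neg hn] at hi
    have h3 : -(muErr c d i + 24) < 1 := by
      by_contra! hge
      nlinarith
    unfold muErr at h1 h3
    split_ifs <;> omega
  · obtain ⟨h1, h2⟩ := muErr_of_pos c d hn i
    rw [abs_of_pos hn] at hi
    have h3 : muErr c d i < 1 := by
      by_contra! hge
      nlinarith
    unfold muErr at h1 h3
    split_ifs <;> omega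

theorem abs_two_sum_limTheta_sub_le (c d : ℤ) (r : ℕ) :
    |2 * ∑ i ∈ Finset.range r, (limTheta c d i : ℤ) - alphaCD c d * r| ≤ alphaCD c d := by
  have ev : ∀ i, i % 2 = 0 → limTheta c d i = limTheta c d 0 := by
    intro i hi; simp [limTheta, limMu, limNum, lamSeq, hi]
  have od : ∀ i, i % 2 = 1 → limTheta c d i = limTheta c d 1 := by
    intro i hi; simp [limTheta, limMu, limNum, lamSeq, hi]
  have hα : alphaCD c d = limTheta c d 1 + limTheta c d 0 := by
    simp [alphaCD, limTheta, limMu, limNum, lamSeq]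
  have key : 2 * ∑ i ∈ Finset.range r, (limTheta c d i : ℤ) - alphaCD c d * r =
      if r % 2 = 0 then 0 else (limTheta c d 0 : ℤ) - limTheta c d 1 := by
    induction r with
    | zero => simp
    | succ r ih =>
      rw [Finset.sum_range_succ]
      rcases Nat.mod_two_eq_zero_or_one r with h | h
      · have h' : (r + 1) % 2 = 1 := by omega
        rw [ev r h]
        simp only [h, h', hα] at ih ⊢
        push_cast at ih ⊢
        linarith
      · have h' : (r + 1) % 2 = 0 := by omega
        rw [od r h]
        simp only [h, h', hα] at ih ⊢
        push_cast at ih ⊢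
        linarith
  rw [key, abs_le, hα]
  split_ifs <;> push_cast <;> constructor <;> omega

theorem abs_Aseq_sub_sum_limTheta_le (c d : ℤ) (h : c + 11 * d ≠ 0) (K r : ℕ)
    (hK : |c + 11 * d| < 11 ^ K) :
    |(Aseq c d r : ℤ) - ∑ i ∈ Finset.range r, (limTheta c d i : ℤ)| ≤ K := by
  suffices H : |(Aseq c d r : ℤ) - ∑ i ∈ Finset.range r, (limTheta c d i : ℤ)| ≤ (min r K : ℕ) by
    omega
  unfold Aseq
  push_cast
  induction r with
  | zero => simp
  | succ r ih =>
    rw [Finset.sum_range_succ, Finset.sum_range_succ]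
    have h1 := theta_le_one (lamSeq c d r) (muSeq c d r)
    have h2 : limTheta c d r ≤ 1 := theta_le_one _ _
    have h3 : K ≤ r → theta (lamSeq c d r) (muSeq c d r) = limTheta c d r := by
      intro hr
      rw [limTheta, muSeq_eq_limMu c d h r
        (hK.trans_le (pow_le_pow_right₀ (by norm_num) hr))]
    rw [abs_le] at ih ⊢
    push_cast
    rcases le_or_gt K r with hr | hr
    · have := h3 hr
      omega
    · omega

theorem stmt1 (c d : ℤ) (h : c + 11 * d ≠ 0) (r : ℕ) (hr : 0 < r) :
    |(Aseq c d r : ℝ) - (alphaCD c d : ℝ) * r / 2| <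
      2 + (alphaCD c d : ℝ) / 2 +
        (1 + (alphaCD c d : ℝ) / 2) * Real.logb 11 |((c + 11 * d : ℤ) : ℝ)| := by
  set n : ℕ := (c + 11 * d).natAbs with hn
  have hn0 : n ≠ 0 := by omega
  have habs : |((c + 11 * d : ℤ) : ℝ)| = (n : ℝ) := by
    rw [hn, Nat.cast_natAbs, Int.cast_abs]
  have hK : |c + 11 * d| < 11 ^ (Nat.log 11 n + 1) := by
    rw [Int.abs_eq_natAbs]
    exact_mod_cast Nat.lt_pow_succ_log_self (b := 11) (by norm_num) n
  have h1 := abs_Aseq_sub_sum_limTheta_le c d h _ r hK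
  have h2 := abs_two_sum_limTheta_sub_le c d r
  have hL : (Nat.log 11 n : ℝ) ≤ Real.logb 11 n := by
    exact_mod_cast Real.natLog_le_logb n 11
  have hL0 : (0 : ℝ) ≤ Real.logb 11 n := le_trans (Nat.cast_nonneg _) hL
  rw [habs]
  have h1' : |(Aseq c d r : ℝ) - ∑ i ∈ Finset.range r, (limTheta c d i : ℝ)| ≤
      (Nat.log 11 n : ℝ) + 1 := by exact_mod_cast h1
  have h2' : |2 * ∑ i ∈ Finset.range r, (limTheta c d i : ℝ) - alphaCD c d * r| ≤
      (alphaCD c d : ℝ) := by exact_mod_cast h2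
  have h3 : 0 ≤ (alphaCD c d : ℝ) / 2 * Real.logb 11 n := by positivity
  rw [abs_le] at h1' h2'
  rw [abs_lt]
  constructor <;> linarith [h1'.1, h1'.2, h2'.1, h2'.2]
end

section
/- Let c and d be integers. For every positive integer r, 24·n_r ≡ c + 11d (mod 11^r). -/
/-- `n_r`: defined by `n_0 = 0` and `n_r = n_{r-1} - 5 λ_{r-1} 11^{r-1}`. -/
def nseq (c d : ℤ) : ℕ → ℤ
  | 0 => 0
  | r + 1 => nseq c d r - 5 * lamSeq c d r * 11 ^ r

/-- The error term behind the congruence, exactly. The inductive step uses `λ_{r+2} = λ_r` and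
`1 + 120 = 11 ^ 2`. -/
theorem nseq_closed (c d : ℤ) (r : ℕ) :
    24 * nseq c d r =
      c + 11 * d - 11 ^ r * (lamSeq c d r + 11 * lamSeq c d (r + 1)) := by
  induction r with
  | zero => simp [nseq, lamSeq]
  | succ r ih =>
    have h : lamSeq c d (r + 1 + 1) = lamSeq c d r := by
      simp [lamSeq, add_assoc]
    rw [nseq, h, pow_succ]
    linear_combination ih

theorem stmt16 (c d : ℤ) (r : ℕ) (hr : 0 < r) :
    24 * nseq c d r ≡ c + 11 * d [ZMOD (11 : ℤ) ^ r] := by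
  rw [nseq_closed]
  exact Int.modEq_iff_dvd.mpr ⟨lamSeq c d r + 11 * lamSeq c d (r + 1), by ring⟩
end

section
/- Let c and d be integers. For every positive integer r, the integers μ_r satisfy μ_{2r-1} = ⌈(11c + d)/24 − (c + 11d)/(24·11^{2r-1})⌉ and μ_{2r} = ⌈(c + 11d)/24 − (c + 11d)/(24·11^{2r})⌉; equivalently, μ_r is the least integer m such that 11^r m + n_r ≥ 0. -/
theorem muSeq_le_iff (c d : ℤ) (r : ℕ) (m : ℤ) :
    muSeq c d r ≤ m ↔ 0 ≤ 11 ^ r * m + nseq c d r := by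
  induction r generalizing m with
  | zero => simp [muSeq, nseq]
  | succ r ih =>
    have h : muSeq c d (r + 1) ≤ m ↔ muSeq c d r ≤ 11 * m - 5 * lamSeq c d r := by
      rw [muSeq, Int.ceil_le, div_le_iff₀ (by norm_num)]
      norm_cast
      omega
    rw [h, ih, nseq]
    ring_nf

theorem muSeq_eq_ceil (c d : ℤ) (r : ℕ) :
    muSeq c d r = ⌈-(nseq c d r : ℚ) / 11 ^ r⌉ := by
  refine eq_of_forall_ge_iff fun m => ?_
  rw [muSeq_le_iff, Int.ceil_le, div_le_iff₀ (by positivity), neg_le_iff_add_nonneg,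
    mul_comm (m : ℚ)]
  norm_cast

theorem nseq_even (c d : ℤ) (k : ℕ) :
    24 * nseq c d (2 * k) = -((c + 11 * d) * (11 ^ (2 * k) - 1)) := by
  induction k with
  | zero => simp [nseq]
  | succ k ih =>
    have h0 : lamSeq c d (2 * k) = c := by simp [lamSeq]
    have h1 : lamSeq c d (2 * k + 1) = d := by simp [lamSeq, Nat.add_mod]
    rw [show 2 * (k + 1) = 2 * k + 1 + 1 by ring, nseq, nseq, h0, h1, pow_succ, pow_succ]
    linear_combination ih

theorem nseq_odd (c d : ℤ) (k : ℕ) :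
    24 * nseq c d (2 * k + 1) = -((11 * c + d) * 11 ^ (2 * k + 1) - (c + 11 * d)) := by
  have h0 : lamSeq c d (2 * k) = c := by simp [lamSeq]
  rw [nseq, h0, pow_succ]
  linear_combination nseq_even c d k

theorem stmt17 (c d : ℤ) (r : ℕ) (hr : 0 < r) :
    muSeq c d (2 * r - 1) =
        ⌈((11 * c + d : ℤ) : ℚ) / 24 - ((c + 11 * d : ℤ) : ℚ) / (24 * 11 ^ (2 * r - 1))⌉ ∧
    muSeq c d (2 * r) =
        ⌈((c + 11 * d : ℤ) : ℚ) / 24 - ((c + 11 * d : ℤ) : ℚ) / (24 * 11 ^ (2 * r))⌉ ∧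
    IsLeast {m : ℤ | 0 ≤ 11 ^ r * m + nseq c d r} (muSeq c d r) := by
  refine ⟨?_, ?_, (muSeq_le_iff c d r _).1 le_rfl, fun m hm => (muSeq_le_iff c d r m).2 hm⟩
  · obtain ⟨k, rfl⟩ := Nat.exists_eq_add_of_lt hr
    rw [show 2 * (0 + k + 1) - 1 = 2 * k + 1 by omega, muSeq_eq_ceil]
    have h : (24 : ℚ) * nseq c d (2 * k + 1) =
        -((11 * c + d) * 11 ^ (2 * k + 1) - (c + 11 * d)) := mod_cast nseq_odd c d k
    congr 1
    push_cast
    have hp : (11 : ℚ) ^ (2 * k + 1) ≠ 0 := by positivity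
    generalize (11 : ℚ) ^ (2 * k + 1) = p at *
    field_simp
    linear_combination -h
  · rw [muSeq_eq_ceil]
    have h : (24 : ℚ) * nseq c d (2 * r) =
        -((c + 11 * d) * (11 ^ (2 * r) - 1)) := mod_cast nseq_even c d r
    congr 1
    push_cast
    have hp : (11 : ℚ) ^ (2 * r) ≠ 0 := by positivity
    generalize (11 : ℚ) ^ (2 * r) = p at *
    field_simp
    linear_combination -h
end
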